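/- Let I be a compact interval and w : ℝ → [0,1] integrable. Then 1 is not an eigenvalue of the operator χ_I K_w χ_I on L²(ℝ): if χ_I K_w χ_I f = f for f ∈ L²(ℝ), then f = 0. -/

import Mathlib

open MeasureTheory
open FourierTransform in
/-- The `L²` Fourier transform agrees with the Fourier integral on `L¹ ∩ L²`. -/
lemma fourier_ae_eq_of_integrable (f : Lp ℂ 2 (volume : Measure ℝ)) (hf : Integrable (f : ℝ → ℂ)) :
    ∀ᵐ u, (𝓕 f : Lp ℂ 2 (volume : Measure ℝ)) u = 𝓕 (f : ℝ → ℂ) u := by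
  have hc : Continuous (𝓕 (f : ℝ → ℂ)) :=
    VectorFourier.fourierIntegral_continuous Real.continuous_fourierChar
      (by exact continuous_inner) hf
  refine ae_eq_of_integral_contDiff_smul_eq
    ((Lp.memLp _).locallyIntegrable (by norm_num)) hc.locallyIntegrable ?_
  intro g g_smooth g_cpt
  have hg₁ : HasCompactSupport (Complex.ofRealCLM ∘ g) := g_cpt.comp_left rfl
  have hg₂ : ContDiff ℝ (↑(⊤ : ℕ∞)) (Complex.ofRealCLM ∘ g) := by fun_prop
  set G := hg₁.toSchwartzMap hg₂ with hG
  have h1 := congrArg (fun T => T G) (Lp.fourier_toTemperedDistribution_eq f)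
  simp only [TemperedDistribution.fourier_apply, Lp.toTemperedDistribution_apply] at h1
  have h2 := VectorFourier.integral_fourierIntegral_smul_eq_flip (μ := (volume : Measure ℝ))
    (ν := (volume : Measure ℝ)) (L := innerₗ ℝ) (f := (G : ℝ → ℂ)) (g := (f : ℝ → ℂ))
    Real.continuous_fourierChar (by exact continuous_inner) G.integrable hf
  rw [flip_innerₗ] at h2
  have h3 : _ = ∫ x, G x • 𝓕 (f : ℝ → ℂ) x := h1.symm.trans h2
  simpa [hG] using h3

open FourierTransform in
lemma plancherel_L1L2 (f : Lp ℂ 2 (volume : Measure ℝ)) (hf : Integrable (f : ℝ → ℂ)) :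
    Integrable (fun u => ‖𝓕 (f : ℝ → ℂ) u‖ ^ 2) ∧
    ∫ u, ‖𝓕 (f : ℝ → ℂ) u‖ ^ 2 = ∫ x, ‖f x‖ ^ 2 := by
  have h := fourier_ae_eq_of_integrable f hf
  have h' : (fun u => ‖(𝓕 f : Lp ℂ 2 (volume : Measure ℝ)) u‖ ^ 2) =ᵐ[volume]
      (fun u => ‖𝓕 (f : ℝ → ℂ) u‖ ^ 2) := by
    filter_upwards [h] with u hu; rw [hu]
  have key : ∀ g : Lp ℂ 2 (volume : Measure ℝ), ∫ x, ‖g x‖ ^ 2 = ‖g‖ ^ 2 := by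
    intro g
    have := L2.inner_def (𝕜 := ℂ) g g
    rw [inner_self_eq_norm_sq_to_K] at this
    simp only [inner_self_eq_norm_sq_to_K] at this
    have h2 : ((‖g‖ ^ 2 : ℝ) : ℂ) = ((∫ x, ‖g x‖ ^ 2 : ℝ) : ℂ) := by
      rw [← integral_complex_ofReal]
      simpa using this
    exact_mod_cast h2.symm
  constructor
  · exact ((Lp.memLp (𝓕 f : Lp ℂ 2 (volume : Measure ℝ))).integrable_norm_pow
      (p := 2) (by norm_num)).congr h'
  · rw [← integral_congr_ae h', key, key, Lp.norm_fourier_eq]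

/-- Entire extension of the Fourier transform of a compactly supported function. -/
lemma differentiable_fourier_compact (a b : ℝ) (f : ℝ → ℂ)
    (hf : Integrable f (volume.restrict (Set.Icc a b))) :
    Differentiable ℂ (fun z : ℂ => ∫ y in Set.Icc a b,
      Complex.exp (-(2 * Real.pi * Complex.I * y * z)) * f y) := by
  intro z₀
  set R : ℝ := max |a| |b|
  set C : ℝ := 2 * Real.pi * R
  have hcont : ∀ z : ℂ, Continuous fun y : ℝ =>
    Complex.exp (-(2 * Real.pi * Complex.I * y * z)) := by intro z; fun_prop
  have hnorm : ∀ z : ℂ, ∀ y ∈ Set.Icc a b, ‖(2 * Real.pi * Complex.I * y : ℂ)‖ ≤ C := by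
    intro z y hy
    have : |y| ≤ R := abs_le_max_abs_abs hy.1 hy.2
    simp only [norm_mul, Complex.norm_ofNat, Complex.norm_real, Complex.norm_I, mul_one,
      Real.norm_eq_abs, abs_of_pos Real.pi_pos]
    have := Real.pi_pos
    simp only [C]; gcongr
  have hexp : ∀ z : ℂ, ∀ y ∈ Set.Icc a b,
      ‖Complex.exp (-(2 * Real.pi * Complex.I * y * z))‖ ≤ Real.exp (C * ‖z‖) := by
    intro z y hy
    refine (Complex.norm_exp_le_exp_norm _).trans (Real.exp_le_exp.2 ?_)
    rw [norm_neg, norm_mul]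
    gcongr
    exact hnorm z y hy
  have hae : ∀ᵐ y ∂(volume.restrict (Set.Icc a b)), y ∈ Set.Icc a b :=
    ae_restrict_mem measurableSet_Icc
  have hC : 0 ≤ C := by
    have : 0 ≤ R := (abs_nonneg a).trans (le_max_left _ _)
    have := Real.pi_pos
    positivity
  refine (hasDerivAt_integral_of_dominated_loc_of_deriv_le (𝕜 := ℂ)
    (μ := volume.restrict (Set.Icc a b))
    (F := fun z y => Complex.exp (-(2 * Real.pi * Complex.I * y * z)) * f y)
    (F' := fun z y => (Complex.exp (-(2 * Real.pi * Complex.I * y * z)) *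
      (-(2 * Real.pi * Complex.I * y))) * f y)
    (bound := fun y => (Real.exp (C * (‖z₀‖ + 1)) * C) * ‖f y‖)
    (Metric.ball_mem_nhds z₀ one_pos) ?_ ?_ ?_ ?_ ?_ ?_).2.differentiableAt
  · exact Filter.Eventually.of_forall fun z => (hcont z).aestronglyMeasurable.mul hf.1
  · refine hf.bdd_mul (c := Real.exp (C * ‖z₀‖)) (hcont z₀).aestronglyMeasurable ?_
    filter_upwards [hae] with y hy using hexp z₀ y hy
  · exact (Continuous.aestronglyMeasurable (by fun_prop)).mul hf.1
  · filter_upwards [hae] with y hy z hz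
    rw [norm_mul, norm_mul, norm_neg]
    have h1 := hexp z y hy
    have h2 := hnorm z y hy
    have h3 : ‖z‖ ≤ ‖z₀‖ + 1 := by
      have := norm_le_norm_add_norm_sub' z z₀
      rw [Metric.mem_ball, dist_eq_norm] at hz
      linarith
    gcongr
    exact h1.trans (by gcongr)
  · exact hf.norm.const_mul _
  · refine Filter.Eventually.of_forall fun y z _ => ?_
    refine HasDerivAt.mul_const ?_ _
    refine HasDerivAt.cexp ?_
    have h := ((hasDerivAt_id z).const_mul (2 * Real.pi * Complex.I * y : ℂ)).fun_neg
    rw [mul_one] at h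
    exact h

lemma fubini_kernel (μ ν : Measure ℝ) [SFinite μ] [SFinite ν] (p q : ℝ → ℂ) (hp : Integrable p μ)
    (hq : Integrable q ν) (k : ℝ → ℝ → ℂ) (hk : Continuous (Function.uncurry k))
    (hk1 : ∀ x u, ‖k x u‖ ≤ 1) :
    ∫ x, (∫ u, k x u * q u ∂ν) * p x ∂μ = ∫ u, (∫ x, k x u * p x ∂μ) * q u ∂ν := by
  simp_rw [← integral_mul_const]
  rw [integral_integral_swap]
  · congr 1; ext u; congr 1; ext x; ring
  · have := (hp.mul_prod hq).bdd_mul (c := 1) hk.aestronglyMeasurable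
      (Filter.Eventually.of_forall fun z => hk1 z.1 z.2)
    refine this.congr (Filter.Eventually.of_forall fun z => ?_)
    simp only [Function.uncurry]; ring

/-- For a compact interval `I = [a,b]` and integrable `w : ℝ → [0,1]`, `1` is not an
eigenvalue of the operator `χ_I K_w χ_I` on `L²(ℝ)`: if `χ_I K_w χ_I f = f`, then `f = 0`. -/
theorem deformed_sine_kernel_one_not_eigenvalue (a b : ℝ) (w : ℝ → ℝ)
    (hw : Integrable w) (hw01 : ∀ u, w u ∈ Set.Icc (0 : ℝ) 1)
    (T : Lp ℂ 2 (volume : Measure ℝ) →L[ℂ] Lp ℂ 2 (volume : Measure ℝ))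
    (hT : ∀ f : Lp ℂ 2 (volume : Measure ℝ),
      (T f : ℝ → ℂ) =ᵐ[volume] fun x =>
        Set.indicator (Set.Icc a b)
          (fun x' => ∫ y in Set.Icc a b,
            (∫ u : ℝ, Complex.exp (2 * (Real.pi : ℂ) * Complex.I * ((x' : ℂ) - (y : ℂ)) * (u : ℂ))
              * (w u : ℂ)) * f y) x) :
    ∀ f : Lp ℂ 2 (volume : Measure ℝ), T f = f → f = 0 := by
  intro f hTf
  have hfg := hT f
  rw [hTf] at hfg
  set I := Set.Icc a b with hI
  have hmI : MeasurableSet I := measurableSet_Icc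
  have hfI : Integrable (f : ℝ → ℂ) (volume.restrict I) := by
    have : IsFiniteMeasure ((volume : Measure ℝ).restrict I) :=
      ⟨by rw [Measure.restrict_apply_univ]; exact measure_Icc_lt_top⟩
    exact ((Lp.memLp f).restrict I).integrable (by norm_num)
  have hfind : (f : ℝ → ℂ) =ᵐ[volume] I.indicator (f : ℝ → ℂ) := by
    filter_upwards [hfg] with x hx
    by_cases hxI : x ∈ I
    · rw [Set.indicator_of_mem hxI]
    · rw [Set.indicator_of_notMem hxI, hx, Set.indicator_of_notMem hxI]
  have hfint : Integrable (f : ℝ → ℂ) :=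
    ((integrable_indicator_iff hmI).2 hfI).congr hfind.symm
  obtain ⟨hF2, hPl⟩ := plancherel_L1L2 f hfint
  set F : ℝ → ℂ := FourierTransform.fourier (f : ℝ → ℂ) with hFdef
  have hFeq : ∀ u : ℝ, F u = ∫ y in I, Complex.exp (-(2 * Real.pi * Complex.I * y * u)) * f y := by
    intro u
    rw [hFdef, Real.fourier_real_eq_integral_exp_smul, ← integral_indicator hmI]
    refine integral_congr_ae ?_
    filter_upwards [hfind] with y hy
    by_cases hyI : y ∈ I
    · rw [Set.indicator_of_mem hyI, smul_eq_mul]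
      congr 2; push_cast; ring
    · rw [Set.indicator_of_notMem hyI] at hy
      rw [Set.indicator_of_notMem hyI, hy, smul_zero]
  have hFc : Continuous F :=
    VectorFourier.fourierIntegral_continuous Real.continuous_fourierChar
      (by exact continuous_inner) hfint
  have hexp1 : ∀ t : ℝ, ‖Complex.exp (2 * Real.pi * Complex.I * t)‖ = 1 := by
    intro t
    have : (2 * Real.pi * Complex.I * t : ℂ) = ((2 * Real.pi * t : ℝ) : ℂ) * Complex.I := by
      push_cast; ring
    rw [this, Complex.norm_exp_ofReal_mul_I]
  have hwC : Integrable (fun u => (w u : ℂ)) := hw.ofReal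
  -- the kernel operator as an inverse Fourier transform
  have hg : ∀ x : ℝ, (∫ y in I, (∫ u : ℝ, Complex.exp (2 * (Real.pi : ℂ) * Complex.I *
      ((x : ℂ) - (y : ℂ)) * (u : ℂ)) * (w u : ℂ)) * f y) =
      ∫ u : ℝ, Complex.exp (2 * Real.pi * Complex.I * x * u) * (F u * w u) := by
    intro x
    rw [fubini_kernel (volume.restrict I) volume f (fun u => (w u : ℂ)) hfI hwC
      (fun y u => Complex.exp (2 * (Real.pi : ℂ) * Complex.I * ((x : ℂ) - (y : ℂ)) * (u : ℂ)))
      (by fun_prop) ?_]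
    · congr 1; ext u
      rw [hFeq u, ← mul_assoc, ← integral_const_mul]
      congr 2; ext y
      rw [← mul_assoc, ← Complex.exp_add]
      congr 2; ring
    · intro y u
      have := hexp1 ((x - y) * u)
      push_cast at this
      rw [mul_assoc]
      exact this.le
  obtain ⟨B, hB⟩ : ∃ B : ℝ, ∀ u, ‖F u‖ ≤ B :=
    ⟨∫ x, ‖f x‖, fun u => VectorFourier.norm_fourierIntegral_le_integral_norm _ _ _ _ _⟩
  have hFw : Integrable (fun u => F u * w u) :=
    hwC.bdd_mul hFc.aestronglyMeasurable (Filter.Eventually.of_forall hB)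
  have hconj : Integrable (fun x => (starRingEnd ℂ) (f x)) (volume.restrict I) :=
    (Complex.conjLIE.toContinuousLinearEquiv : ℂ →L[ℝ] ℂ).integrable_comp hfI
  have hswap := fubini_kernel (volume.restrict I) volume (fun x => (starRingEnd ℂ) (f x))
    (fun u => F u * w u) hconj hFw (fun x u => Complex.exp (2 * Real.pi * Complex.I * x * u))
    (by fun_prop) (by
      intro x u
      have := hexp1 (x * u)
      push_cast at this
      rw [mul_assoc]
      exact this.le)
  have hL : (∫ x in I, (∫ u : ℝ, Complex.exp (2 * Real.pi * Complex.I * x * u) * (F u * w u)) *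
      (starRingEnd ℂ) (f x)) = ((∫ x, ‖f x‖ ^ 2 : ℝ) : ℂ) := by
    rw [← integral_complex_ofReal, ← integral_indicator hmI]
    refine integral_congr_ae ?_
    filter_upwards [hfg] with x hx
    by_cases hxI : x ∈ I
    · rw [Set.indicator_of_mem hxI] at hx ⊢
      rw [← hg x, ← hx, Complex.mul_conj']
      push_cast; rfl
    · rw [Set.indicator_of_notMem hxI] at hx ⊢
      simp [hx]
  have hR : (∫ u : ℝ, (∫ x in I, Complex.exp (2 * Real.pi * Complex.I * x * u) *
      (starRingEnd ℂ) (f x)) * (F u * w u)) = ((∫ u, ‖F u‖ ^ 2 * w u : ℝ) : ℂ) := by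
    rw [← integral_complex_ofReal]
    congr 1; ext u
    have : (∫ x in I, Complex.exp (2 * Real.pi * Complex.I * x * u) *
      (starRingEnd ℂ) (f x)) = (starRingEnd ℂ) (F u) := by
      rw [hFeq u, ← integral_conj]
      congr 1; ext x
      have h2 : (starRingEnd ℂ) (2 : ℂ) = 2 := Complex.conj_ofNat 2
      rw [map_mul, ← Complex.exp_conj]
      simp [h2]
    rw [this, ← mul_assoc, Complex.conj_mul']
    push_cast; rfl
  have hEq : ∫ u, ‖F u‖ ^ 2 * w u = ∫ u, ‖F u‖ ^ 2 := by
    rw [hPl]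
    exact_mod_cast (hR.symm.trans (hswap.symm.trans hL))
  have hF2w : Integrable (fun u => ‖F u‖ ^ 2 * w u) := by
    refine hF2.mul_bdd (c := 1) hw.1 (Filter.Eventually.of_forall fun u => ?_)
    rw [Real.norm_eq_abs, abs_of_nonneg (hw01 u).1]
    exact (hw01 u).2
  have hzero : ∀ᵐ u, ‖F u‖ ^ 2 - ‖F u‖ ^ 2 * w u = 0 := by
    have h0 : ∫ u, (‖F u‖ ^ 2 - ‖F u‖ ^ 2 * w u) = 0 := by
      rw [integral_sub hF2 hF2w, hEq, sub_self]
    refine (integral_eq_zero_iff_of_nonneg (fun u => ?_) (hF2.sub hF2w)).1 h0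
    have := mul_le_mul_of_nonneg_left (hw01 u).2 (sq_nonneg ‖F u‖)
    simp only [Pi.zero_apply, Pi.sub_apply]
    linarith
  -- analyticity forces `F` to vanish
  have hF0 : ∀ u, F u = 0 := by
    by_contra! hne
    obtain ⟨u₀, hu₀⟩ := hne
    have hD := differentiable_fourier_compact a b f hfI
    have hA : AnalyticOnNhd ℝ F Set.univ := by
      intro u _
      have h1 := (hD.analyticAt (u : ℂ)).restrictScalars (𝕜 := ℝ)
      have h2 : AnalyticAt ℝ (fun t : ℝ => (t : ℂ)) u := Complex.ofRealCLM.analyticAt u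
      have h3 := h1.fun_comp h2
      have : F = fun t : ℝ => ∫ y in I, Complex.exp (-(2 * Real.pi * Complex.I * y * t)) * f y :=
        funext hFeq
      rw [this]
      exact h3
    have hcod := hA.preimage_zero_mem_codiscrete hu₀
    have hae : ∀ᵐ u, F u ≠ 0 := by
      have := ae_restrict_le_codiscreteWithin (μ := (volume : Measure ℝ)) MeasurableSet.univ hcod
      rwa [Measure.restrict_univ] at this
    have hw1 : (fun _ => (1 : ℝ)) =ᵐ[volume] w := by
      filter_upwards [hae, hzero] with u h1 h2
      have h3 : ‖F u‖ ^ 2 ≠ 0 := by simpa using h1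
      have h4 : ‖F u‖ ^ 2 * (1 - w u) = 0 := by linarith
      rcases mul_eq_zero.1 h4 with h | h
      · exact absurd h h3
      · linarith
    have h1 : Integrable (fun _ : ℝ => (1 : ℝ)) := hw.congr hw1.symm
    rw [integrable_const_iff] at h1
    rcases h1 with h1 | h1
    · norm_num at h1
    · have := h1.measure_univ_lt_top
      simp at this
  have hn : ∫ x, ‖f x‖ ^ 2 = 0 := by rw [← hPl]; simp [hF0]
  have hfint2 : Integrable (fun x => ‖f x‖ ^ 2) :=
    (Lp.memLp f).integrable_norm_pow (p := 2) (by norm_num)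
  rw [Lp.eq_zero_iff_ae_eq_zero]
  filter_upwards [(integral_eq_zero_iff_of_nonneg (fun x => by positivity) hfint2).1 hn] with x hx
  simpa using hx
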